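/- arXiv:math/0703180 — 2 statements merged into one kernel-verified Lean document; each statement's English description precedes it below -/
import Mathlib

section
/- Let F be a field of prime characteristic p and let f(x_1,...,x_n) = a_1 x_1^k + ... + a_n x_n^k + g(x_1,...,x_n) be a polynomial over F, where k is a positive integer, a_1,...,a_n are nonzero elements of F, and g is a polynomial of total degree less than k. If A is a finite nonempty subset of F satisfying ⌊(|A|-1)/k⌋ ≥ (p-1)/n (equivalently, n·⌊(|A|-1)/k⌋ ≥ p-1), then the value set {f(x_1,...,x_n) : x_1,...,x_n ∈ A} has cardinality at least p. -/
/-!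
Suppose `f` takes only values in `V` on a grid and put `m = |V|`. Then `∏ v ∈ V, (f - v)` vanishes
on the grid, and its part of degree `m * k` is the `m`-th power of the leading form
`∑ i, a i * X i ^ k`. By the Combinatorial Nullstellensatz the coefficients of this power vanish at
all exponents below the side lengths of the grid. At the exponent `k • q` with `∑ i, q i = m` the
coefficient is a multinomial coefficient times `∏ i, a i ^ q i`, which is nonzero as long as `m !`
is nonzero in `R`, in particular when `m < p`; if `V` is too small, some such `q` fits into the
grid.
-/

open MvPolynomial

open scoped Nat

section LeadingForm

variable {σ R ι : Type*}

section CommSemiring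

variable [CommSemiring R]

lemma homogeneousComponent_mul_of_totalDegree_le {f g : MvPolynomial σ R} {a b : ℕ}
    (hf : f.totalDegree ≤ a) (hg : g.totalDegree ≤ b) :
    homogeneousComponent (a + b) (f * g) =
      homogeneousComponent a f * homogeneousComponent b g := by
  classical
  ext d
  by_cases hd : d.degree = a + b
  · rw [coeff_homogeneousComponent, if_pos hd, coeff_mul, coeff_mul]
    refine Finset.sum_congr rfl fun ⟨x, y⟩ hxy ↦ ?_
    have hdeg : x.degree + y.degree = a + b := by
      rw [← map_add, Finset.HasAntidiagonal.mem_antidiagonal.1 hxy, hd]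
    rw [coeff_homogeneousComponent, coeff_homogeneousComponent]
    rcases lt_trichotomy x.degree a with hx | hx | hx
    · have hy : b < y.degree := by lia
      have hgy : coeff y g = 0 := coeff_eq_zero_of_totalDegree_lt (hg.trans_lt hy)
      simp [hgy]
    · rw [if_pos hx, if_pos (by lia)]
    · have hfx : coeff x f = 0 := coeff_eq_zero_of_totalDegree_lt (hf.trans_lt hx)
      simp [hfx]
  · rw [coeff_homogeneousComponent, if_neg hd,
      ((homogeneousComponent_isHomogeneous a f).mul
        (homogeneousComponent_isHomogeneous b g)).coeff_eq_zero hd]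

lemma homogeneousComponent_prod_of_totalDegree_le {s : Finset ι} {f : ι → MvPolynomial σ R}
    {d : ι → ℕ} (h : ∀ i ∈ s, (f i).totalDegree ≤ d i) :
    homogeneousComponent (∑ i ∈ s, d i) (∏ i ∈ s, f i) =
      ∏ i ∈ s, homogeneousComponent (d i) (f i) := by
  induction s using Finset.cons_induction with
  | empty => simp
  | cons i s hi ih =>
    rw [Finset.forall_mem_cons] at h
    have hs : (∏ j ∈ s, f j).totalDegree ≤ ∑ j ∈ s, d j :=
      (totalDegree_finsetProd s f).trans (Finset.sum_le_sum h.2)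
    rw [Finset.sum_cons, Finset.prod_cons, Finset.prod_cons,
      homogeneousComponent_mul_of_totalDegree_le h.1 hs, ih h.2]

end CommSemiring

section CommRing

variable [CommRing R] {f : MvPolynomial σ R} {k : ℕ}

lemma homogeneousComponent_prod_sub_C (hk : 0 < k) (hf : f.totalDegree ≤ k) (V : Finset R) :
    homogeneousComponent (V.card * k) (∏ v ∈ V, (f - C v)) =
      homogeneousComponent k f ^ V.card := by
  have hdeg : ∀ v ∈ V, (f - C v).totalDegree ≤ k := fun v _ ↦
    (totalDegree_sub_C_le f v).trans hf
  have htop : ∀ v, homogeneousComponent k (f - C v) = homogeneousComponent k f := fun v ↦ by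
    rw [map_sub, homogeneousComponent_eq_zero k (C v) (by rwa [totalDegree_C]), sub_zero]
  simpa [htop] using homogeneousComponent_prod_of_totalDegree_le hdeg

theorem coeff_homogeneousComponent_pow_card_eq_zero [IsDomain R] [Finite σ]
    (hk : 0 < k) (hf : f.totalDegree ≤ k) {S : σ → Finset R} {V : Finset R}
    (hV : ∀ x : σ → R, (∀ i, x i ∈ S i) → eval x f ∈ V)
    {t : σ →₀ ℕ} (ht : ∀ i, t i < (S i).card) :
    coeff t (homogeneousComponent k f ^ V.card) = 0 := by
  set P := ∏ v ∈ V, (f - C v) with hP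
  by_contra hne
  rw [← homogeneousComponent_prod_sub_C hk hf, ← hP, coeff_homogeneousComponent,
    ite_eq_right_iff, Classical.not_imp] at hne
  obtain ⟨htdeg, hcoeff⟩ := hne
  have hPdeg : P.totalDegree ≤ V.card * k :=
    (totalDegree_finsetProd V _).trans <|
      Finset.sum_le_card_nsmul V _ k fun v _ ↦ (totalDegree_sub_C_le f v).trans hf
  have hdeg : P.totalDegree = t.degree :=
    (hPdeg.trans_eq htdeg.symm).antisymm (le_totalDegree (mem_support_iff.2 hcoeff))
  obtain ⟨x, hx, hPx⟩ := combinatorial_nullstellensatz_exists_eval_nonzero P t hcoeff hdeg S ht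
  refine hPx ?_
  rw [hP, map_prod]
  exact Finset.prod_eq_zero (hV x hx) (by simp)

end CommRing

end LeadingForm

section Multinomial

variable {σ R : Type*}

lemma multinomial_dvd_factorial_degree (q : σ →₀ ℕ) : q.multinomial ∣ (q.degree)! :=
  Dvd.intro_left _ (Nat.multinomial_spec q.support q)

lemma natCast_multinomial_ne_zero [Semiring R] {m : ℕ} (hm : (m ! : R) ≠ 0) {q : σ →₀ ℕ}
    (hq : q.degree ≤ m) : (q.multinomial : R) ≠ 0 := by
  have hdvd : q.multinomial ∣ m ! :=
    (multinomial_dvd_factorial_degree q).trans (Nat.factorial_dvd_factorial hq)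
  exact ne_zero_of_dvd_ne_zero hm (Nat.cast_dvd_cast hdvd)

lemma natCast_factorial_ne_zero_of_lt [Ring R] [Nontrivial R] {p m : ℕ} (hp : p.Prime) [CharP R p]
    (hm : m < p) : (m ! : R) ≠ 0 :=
  have : Fact p.Prime := ⟨hp⟩
  ((IsUnit.natCast_factorial_iff_of_charP p).2 hm).ne_zero

end Multinomial

section Diagonal

variable {σ R : Type*} [Fintype σ] [CommSemiring R] {k : ℕ}

lemma isHomogeneous_sum_C_mul_X_pow (a : σ → R) (k : ℕ) :
    (∑ i, C (a i) * X i ^ k : MvPolynomial σ R).IsHomogeneous k :=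
  IsHomogeneous.sum _ _ _ fun i _ ↦ isHomogeneous_C_mul_X_pow (a i) i k

lemma coeff_sum_C_mul_X_pow_pow (hk : k ≠ 0) (a : σ → R) (q : σ →₀ ℕ) :
    coeff (k • q) ((∑ i, C (a i) * X i ^ k) ^ q.degree) =
      q.multinomial * q.prod fun i e ↦ a i ^ e := by
  have hexpand : (∑ i, C (a i) * X i ^ k : MvPolynomial σ R) = expand k (∑ i, a i • X i) := by
    simp [smul_eq_C_mul]
  rw [hexpand, ← map_pow, coeff_expand_smul k hk, coeff_linearCombination_X_pow_of_fintype]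
  exact if_pos rfl

lemma homogeneousComponent_sum_C_mul_X_pow_add (a : σ → R) {g : MvPolynomial σ R}
    (hg : g.totalDegree < k) :
    homogeneousComponent k (∑ i, C (a i) * X i ^ k + g) = ∑ i, C (a i) * X i ^ k := by
  rw [map_add, homogeneousComponent_eq_self (isHomogeneous_sum_C_mul_X_pow a k),
    homogeneousComponent_eq_zero k g hg, add_zero]

lemma totalDegree_sum_C_mul_X_pow_add_le (a : σ → R) {g : MvPolynomial σ R}
    (hg : g.totalDegree < k) : (∑ i, C (a i) * X i ^ k + g).totalDegree ≤ k :=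
  (totalDegree_add _ _).trans (max_le (isHomogeneous_sum_C_mul_X_pow a k).totalDegree_le hg.le)

end Diagonal

theorem stmt3_general {σ R : Type*} [Fintype σ] [CommRing R] [IsDomain R] {k m : ℕ} {a : σ → R}
    (ha : ∀ i, a i ≠ 0) {g f : MvPolynomial σ R} (hg : g.totalDegree < k)
    (hf : f = (∑ i, C (a i) * X i ^ k) + g) {A : σ → Finset R} (hA : ∀ i, (A i).Nonempty)
    (hm : (m ! : R) ≠ 0) (hcard : m ≤ ∑ i, ((A i).card - 1) / k) :
    m < ({y | ∃ x : σ → R, (∀ i, x i ∈ A i) ∧ eval x f = y} : Set R).ncard := by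
  classical
  have hk : 0 < k := Nat.zero_lt_of_lt hg
  set V : Finset R := (Fintype.piFinset A).image fun x ↦ eval x f with hV
  have hVset : {y | ∃ x : σ → R, (∀ i, x i ∈ A i) ∧ eval x f = y} = (V : Set R) := by
    ext y; simp [hV]
  rw [hVset, Set.ncard_coe_finset]
  by_contra! hlt
  obtain ⟨q, hqle, hqdeg⟩ :=
    Finsupp.exists_le_degree_eq (Finsupp.equivFunOnFinite.symm fun i ↦ ((A i).card - 1) / k)
      V.card (by simpa [Finsupp.degree_eq_sum] using hlt.trans hcard)
  have hq : ∀ i, (k • q) i < (A i).card := fun i ↦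
    calc k * q i ≤ k * (((A i).card - 1) / k) := Nat.mul_le_mul_left k (hqle i)
      _ ≤ (A i).card - 1 := Nat.mul_div_le _ k
      _ < (A i).card := Nat.sub_one_lt (hA i).card_ne_zero
  have hzero : coeff (k • q) ((∑ i, C (a i) * X i ^ k) ^ q.degree) = 0 := by
    rw [hqdeg, ← homogeneousComponent_sum_C_mul_X_pow_add a hg, ← hf]
    refine coeff_homogeneousComponent_pow_card_eq_zero hk
      (hf ▸ totalDegree_sum_C_mul_X_pow_add_le a hg) (fun x hx ↦ ?_) hq
    exact Finset.mem_image_of_mem _ (Fintype.mem_piFinset.2 hx)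
  rw [coeff_sum_C_mul_X_pow_pow hk.ne'] at hzero
  exact mul_ne_zero (natCast_multinomial_ne_zero hm (hqdeg.trans_le hlt))
    (Finset.prod_ne_zero_iff.2 fun i _ ↦ pow_ne_zero _ (ha i)) hzero

theorem stmt3 {F : Type*} [Field F] (p : ℕ) (hp : p.Prime) [CharP F p] (n k : ℕ) (hk : 0 < k)
    (a : Fin n → F) (ha : ∀ i, a i ≠ 0)
    (g f : MvPolynomial (Fin n) F) (hg : g.totalDegree < k)
    (hf : f = (∑ i, MvPolynomial.C (a i) * MvPolynomial.X i ^ k) + g)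
    (A : Finset F) (hA : A.Nonempty)
    (hcard : p - 1 ≤ n * ((A.card - 1) / k)) :
    p ≤ ({y | ∃ x : Fin n → F, (∀ i, x i ∈ A) ∧ MvPolynomial.eval x f = y} : Set F).ncard := by
  exact Nat.le_of_pred_lt (stmt3_general ha hg hf (fun _ ↦ hA)
    (natCast_factorial_ne_zero_of_lt hp (Nat.sub_one_lt hp.ne_zero)) (by simpa using hcard))
end

section
/- Let F be a field, let k and n be positive integers, and let A be a finite subset of F with |A| > n. Then the restricted value set {x_1^k + ... + x_n^k : x_1,...,x_n ∈ A, and x_i ≠ x_j whenever i ≠ j} has the same cardinality as the restricted value set {y_1^k + ... + y_m^k : y_1,...,y_m ∈ A, and y_i ≠ y_j whenever i ≠ j}, where m = |A| - n. -/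
open Finset Function

section RestrictedValueSet

variable {α M : Type*}

/-- The restricted value set of `f` over `A` in `n` variables: all sums
`f (x 0) + ⋯ + f (x (n - 1))` with the `x i` pairwise distinct elements of `A`. Distinctness is
encoded as injectivity of the tuple `x : Fin n → α`. -/
def restrictedValueSet [AddCommMonoid M] (f : α → M) (A : Finset α) (n : ℕ) : Set M :=
  {y | ∃ x : Fin n → α, (∀ i, x i ∈ A) ∧ Injective x ∧ ∑ i, f (x i) = y}

theorem restrictedValueSet_eq_image_powersetCard [AddCommMonoid M] (f : α → M) (A : Finset α)
    (n : ℕ) :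
    restrictedValueSet f A n =
      (fun B ↦ ∑ b ∈ B, f b) '' (A.powersetCard n : Set (Finset α)) := by
  ext y
  constructor
  · rintro ⟨x, x_mem, x_inj, rfl⟩
    have range_subset : univ.map ⟨x, x_inj⟩ ⊆ A := by simpa [Finset.subset_iff] using x_mem
    have range_mem : univ.map ⟨x, x_inj⟩ ∈ A.powersetCard n :=
      mem_powersetCard.2 ⟨range_subset, by simp⟩
    exact ⟨_, range_mem, by simp⟩
  · rintro ⟨B, B_mem, rfl⟩
    obtain ⟨B_subset, B_card⟩ := mem_powersetCard.1 B_mem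
    obtain ⟨x, x_range⟩ := Set.powersetCard.ofFinEmb_surjective n α ⟨B, B_card⟩
    obtain rfl : univ.map x = B := congrArg Subtype.val x_range
    exact ⟨x, fun i ↦ B_subset (mem_map_of_mem x (mem_univ i)), x.injective, by simp⟩

theorem sdiff_mem_powersetCard [DecidableEq α] {A B : Finset α} {n m : ℕ} (h : n + m = #A)
    (hB : B ∈ A.powersetCard n) : A \ B ∈ A.powersetCard m := by
  obtain ⟨B_subset, B_card⟩ := mem_powersetCard.1 hB
  exact mem_powersetCard.2 ⟨sdiff_subset, by rw [card_sdiff_of_subset B_subset]; omega⟩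

theorem image_sdiff_powersetCard [DecidableEq α] {A : Finset α} {n m : ℕ} (h : n + m = #A) :
    (A \ ·) '' (A.powersetCard n : Set (Finset α)) = A.powersetCard m := by
  apply Set.Subset.antisymm
  · rintro _ ⟨B, hB, rfl⟩
    exact sdiff_mem_powersetCard h hB
  · intro B hB
    exact ⟨A \ B, sdiff_mem_powersetCard ((add_comm m n).trans h) hB,
      Finset.sdiff_sdiff_eq_self (mem_powersetCard.1 hB).1⟩

theorem image_sub_restrictedValueSet [AddCommGroup M] (f : α → M) {A : Finset α} {n m : ℕ}
    (h : n + m = #A) :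
    ((∑ a ∈ A, f a) - ·) '' restrictedValueSet f A n = restrictedValueSet f A m := by
  classical
  simp only [restrictedValueSet_eq_image_powersetCard, ← image_sdiff_powersetCard h,
    Set.image_image]
  refine Set.image_congr fun B hB ↦ ?_
  exact (sum_sdiff_eq_sub (mem_powersetCard.1 hB).1).symm

theorem stmt13_general [AddCommGroup M] (f : α → M) {A : Finset α} {n m : ℕ}
    (h : n + m = #A) :
    (restrictedValueSet f A n).ncard = (restrictedValueSet f A m).ncard := by
  rw [← image_sub_restrictedValueSet f h, Set.ncard_image_of_injective _ sub_right_injective]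

end RestrictedValueSet

theorem stmt13 {F : Type*} [Field F] (n k : ℕ) (hk : 0 < k) (hn : 0 < n)
    (A : Finset F) (hA : n < A.card) (m : ℕ) (hm : m = A.card - n) :
    ({y | ∃ x : Fin n → F, (∀ i, x i ∈ A) ∧ Function.Injective x ∧
        ∑ i, (x i) ^ k = y} : Set F).ncard
      = ({y | ∃ x : Fin m → F, (∀ i, x i ∈ A) ∧ Function.Injective x ∧
        ∑ i, (x i) ^ k = y} : Set F).ncard :=
  stmt13_general (· ^ k) (by omega)
end
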